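/- Let X, X', Y, Y' be finite types, set I := X × X' and J := Y × Y', let (M_t, M_f) be a binary measurement on ℂ^X and (N_t, N_f) a binary measurement on ℂ^Y. Let E : Matrix I I ℂ → Matrix I I ℂ and F : Matrix J J ℂ → Matrix J J ℂ be linear, map positive semidefinite matrices to positive semidefinite matrices, and be trace-preserving. Define R¹_t(ρ) := (M_t ⊗ 1_{X'}) * ρ * (M_t ⊗ 1_{X'})ᴴ and R¹_f similarly on Matrix I I ℂ, and R²_t(σ) := (N_t ⊗ 1_{Y'}) * σ * (N_t ⊗ 1_{Y'})ᴴ and R²_f similarly on Matrix J J ℂ. Assume that for every positive semidefinite ρ : Matrix I I ℂ the family n ↦ R¹_f((E ∘ R¹_t)^[n] ρ) is summable with Matrix.trace (∑' n, R¹_f((E ∘ R¹_t)^[n] ρ)) = Matrix.trace ρ, and analogously for every positive semidefinite σ : Matrix J J ℂ with (F, R²_t, R²_f). Define W_c(ρ) := ∑' n, R¹_f((E ∘ R¹_t)^[n] ρ) and W_d(σ) := ∑' n, R²_f((F ∘ R²_t)^[n] σ). Let A, B be expectations on I × J, write M_{t,1} := (M_t ⊗ 1_{X'}) ⊗ 1_J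 and N_{t,2} := 1_I ⊗ (N_t ⊗ 1_{Y'}) (similarly with f), and set C := M_{t,1}ᴴ * N_{t,2}ᴴ * A * N_{t,2} * M_{t,1} + M_{f,1}ᴴ * N_{f,2}ᴴ * B * N_{f,2} * M_{f,1}. If qRHL(A, E, F, C) holds, then qRHL(C, W_c, W_d, B) holds. [Rule JointWhile] -/

import Mathlib

open Matrix Kronecker ComplexOrder

noncomputable section

/-- Partial trace over the second factor: `tr₂(ρ) i i' = ∑ j, ρ (i,j) (i',j)`. -/
def trB {I J : Type*} [Fintype J] (ρ : Matrix (I × J) (I × J) ℂ) : Matrix I I ℂ :=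
  Matrix.of fun i i' => ∑ j, ρ (i, j) (i', j)

/-- Partial trace over the first factor: `tr₁(ρ) j j' = ∑ i, ρ (i,j) (i,j')`. -/
def trA {I J : Type*} [Fintype I] (ρ : Matrix (I × J) (I × J) ℂ) : Matrix J J ℂ :=
  Matrix.of fun j j' => ∑ i, ρ (i, j) (i, j')

/-- `ρ` is separable iff it is a finite sum of Kronecker products of
positive semidefinite matrices. -/
def Separable {I J : Type*} [Fintype I] [Fintype J]
    (ρ : Matrix (I × J) (I × J) ℂ) : Prop :=
  ∃ (n : ℕ) (σ : Fin n → Matrix I I ℂ) (τ : Fin n → Matrix J J ℂ),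
    (∀ k, (σ k).PosSemidef) ∧ (∀ k, (τ k).PosSemidef) ∧ ρ = ∑ k, σ k ⊗ₖ τ k

/-- The expectation-qRHL judgment `qRHL(A, E1, E2, B)`. -/
def qRHL {I J : Type*} [Fintype I] [Fintype J]
    (A : Matrix (I × J) (I × J) ℂ)
    (E1 : Matrix I I ℂ → Matrix I I ℂ) (E2 : Matrix J J ℂ → Matrix J J ℂ)
    (B : Matrix (I × J) (I × J) ℂ) : Prop :=
  ∀ ρ : Matrix (I × J) (I × J) ℂ, ρ.PosSemidef → Separable ρ →
    ∃ ρ' : Matrix (I × J) (I × J) ℂ, ρ'.PosSemidef ∧ Separable ρ' ∧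
      trB ρ' = E1 (trB ρ) ∧ trA ρ' = E2 (trA ρ) ∧
      (Matrix.trace (A * ρ)).re ≤ (Matrix.trace (B * ρ')).re


theorem jw_isCompact_convexHull {E : Type*} [AddCommGroup E] [Module ℝ E] [TopologicalSpace E]
    [IsTopologicalAddGroup E] [ContinuousSMul ℝ E] [FiniteDimensional ℝ E] {s : Set E}
    (hs : IsCompact s) : IsCompact (convexHull ℝ s) := by
  classical
  set d := Module.finrank ℝ E + 1 with hd
  have hc : IsCompact ((stdSimplex ℝ (Fin d)) ×ˢ (Set.univ.pi fun _ : Fin d => s)) :=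
    (isCompact_stdSimplex ℝ (Fin d)).prod (isCompact_univ_pi fun _ => hs)
  have hf : Continuous (fun p : (Fin d → ℝ) × (Fin d → E) => ∑ i, p.1 i • p.2 i) := by fun_prop
  have := hc.image hf
  convert this using 1
  ext x
  constructor
  · intro hx
    obtain ⟨ι, _, z, w, hz, hzi, hw, hw1, hx⟩ := eq_pos_convex_span_of_mem_convexHull hx
    have hcard : Fintype.card ι ≤ d := by
      have h1 := hzi.card_le_finrank_succ
      have h2 : Module.finrank ℝ (vectorSpan ℝ (Set.range z)) ≤ Module.finrank ℝ E :=
        Submodule.finrank_le _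
      omega
    obtain ⟨e⟩ : Nonempty (ι ↪ Fin d) := by
      apply Function.Embedding.nonempty_of_card_le
      simpa using hcard
    have hne : Nonempty ι := by
      by_contra hne
      rw [not_nonempty_iff] at hne
      simp at hw1
    obtain ⟨i0⟩ := hne
    have hsum : ∀ {M : Type _} [AddCommMonoid M] (f : Fin d → M) (g : ι → M),
        (∀ i, f (e i) = g i) → (∀ j, (¬ ∃ i, e i = j) → f j = 0) → ∑ j, f j = ∑ i, g i := by
      intro M _ f g h1 h2
      symm
      apply Finset.sum_of_injOn e
      · exact e.injective.injOn
      · simp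
      · intro j _ hj
        apply h2
        rintro ⟨i, rfl⟩
        exact hj (by simp)
      · intro i _; exact (h1 i).symm
    have hsum' : ∀ (f : Fin d → ℝ) (g : ι → ℝ),
        (∀ i, f (e i) = g i) → (∀ j, (¬ ∃ i, e i = j) → f j = 0) → ∑ j, f j = ∑ i, g i := by
      intro f g h1 h2
      symm
      apply Finset.sum_of_injOn e
      · exact e.injective.injOn
      · simp
      · intro j _ hj
        apply h2
        rintro ⟨i, rfl⟩
        exact hj (by simp)
      · intro i _; exact (h1 i).symm
    refine ⟨(fun j => Function.extend e w 0 j, fun j => Function.extend e z (fun _ => z i0) j),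
      ⟨⟨fun j => ?_, ?_⟩, ?_⟩, ?_⟩
    · by_cases hj : ∃ i, e i = j
      · obtain ⟨i, rfl⟩ := hj
        simp [e.injective.extend_apply, (hw i).le]
      · simp [Function.extend_apply' _ _ _ hj]
    · rw [← hw1]
      apply hsum'
      · intro i; simp [e.injective.extend_apply]
      · intro j hj; simp [Function.extend_apply' _ _ _ hj]
    · intro j _
      by_cases hj : ∃ i, e i = j
      · obtain ⟨i, rfl⟩ := hj
        simp only [e.injective.extend_apply]
        exact hz ⟨i, rfl⟩
      · simp only [Function.extend_apply' _ _ _ hj]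
        exact hz ⟨i0, rfl⟩
    · rw [← hx]
      apply hsum
      · intro i; simp [e.injective.extend_apply]
      · intro j hj; simp [Function.extend_apply' _ _ _ hj]
  · rintro ⟨⟨w, z⟩, ⟨⟨hw, hw1⟩, hz⟩, rfl⟩
    exact (convex_convexHull ℝ s).sum_mem (fun i _ => hw i) hw1
      (fun i _ => subset_convexHull ℝ s (hz i trivial))

open scoped MatrixOrder in
theorem jw_psd_sqrt {n : Type*} [Fintype n] {A : Matrix n n ℂ} (hA : A.PosSemidef) :
    ∃ B : Matrix n n ℂ, A = Bᴴ * B := by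
  classical
  exact CStarAlgebra.nonneg_iff_eq_star_mul_self.mp hA.nonneg

theorem jw_psd_entry {n : Type*} [Fintype n] {A : Matrix n n ℂ} (hA : A.PosSemidef) (i j : n) :
    ‖A i j‖ ≤ (Matrix.trace A).re := by
  classical
  have hd : ∀ i, (A i i).re ≤ (Matrix.trace A).re := by
    intro i
    rw [Matrix.trace, Complex.re_sum]
    exact Finset.single_le_sum (f := fun i => (A i i).re)
      (fun i _ => (Complex.le_def.mp (hA.diag_nonneg (i := i))).1) (Finset.mem_univ i)
  have hi := hd i
  have hj := hd j
  obtain ⟨B, hB⟩ := jw_psd_sqrt hA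
  have h1 : ∀ i, (A i i).re = ∑ k, ‖B k i‖ ^ 2 := by
    intro i
    rw [hB, Matrix.mul_apply, Complex.re_sum]
    refine Finset.sum_congr rfl fun k _ => ?_
    rw [Matrix.conjTranspose_apply, ← Complex.normSq_eq_norm_sq, Complex.star_def,
      ← Complex.normSq_eq_conj_mul_self, Complex.ofReal_re]
  have h2 : ‖A i j‖ ≤ ∑ k, (‖B k i‖ ^ 2 + ‖B k j‖ ^ 2) / 2 := by
    rw [hB, Matrix.mul_apply]
    refine (norm_sum_le _ _).trans (Finset.sum_le_sum fun k _ => ?_)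
    rw [Matrix.conjTranspose_apply, norm_mul, norm_star]
    nlinarith [sq_nonneg (‖B k i‖ - ‖B k j‖)]
  rw [← Finset.sum_div, Finset.sum_add_distrib, ← h1, ← h1] at h2
  linarith

theorem jw_isClosed_psd {n : Type*} [Fintype n] :
    IsClosed {A : Matrix n n ℂ | A.PosSemidef} := by
  simp only [posSemidef_iff_dotProduct_mulVec, Matrix.IsHermitian, Set.ofPred_and, Set.ofPred_forall]
  refine IsClosed.inter (isClosed_eq (by fun_prop) (by fun_prop)) ?_
  refine isClosed_iInter fun x => ?_
  exact isClosed_le continuous_const (by fun_prop)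

theorem jw_trace_mul_nonneg {n : Type*} [Fintype n] {A B : Matrix n n ℂ} (hA : A.PosSemidef)
    (hB : B.PosSemidef) : 0 ≤ (Matrix.trace (A * B)).re := by
  classical
  obtain ⟨D, rfl⟩ := jw_psd_sqrt hA
  rw [Matrix.mul_assoc, Matrix.trace_mul_comm]
  exact (Complex.le_def.mp (hB.mul_mul_conjTranspose_same D).trace_nonneg).1

theorem jw_isCompact_states {n : Type*} [Fintype n] :
    IsCompact {A : Matrix n n ℂ | A.PosSemidef ∧ A.trace = 1} := by
  have hc : IsCompact (Set.univ.pi fun _ : n => Set.univ.pi fun _ : n =>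
      Metric.closedBall (0 : ℂ) 1) :=
    isCompact_univ_pi fun _ => isCompact_univ_pi fun _ => isCompact_closedBall _ _
  refine IsCompact.of_isClosed_subset hc ?_ ?_
  · exact jw_isClosed_psd.inter (isClosed_eq (by fun_prop) (by fun_prop))
  · rintro A ⟨hA, hA1⟩ i _ j _
    have := jw_psd_entry hA i j
    rw [hA1] at this
    simpa using this

set_option linter.unusedSectionVars false

section JW
variable {I J : Type*} [Fintype I] [Fintype J]

theorem jw_sep_zero : Separable (0 : Matrix (I × J) (I × J) ℂ) :=
  ⟨0, fun _ => 0, fun _ => 0, fun _ => .zero, fun _ => .zero, by simp⟩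

theorem jw_sep_kron {σ : Matrix I I ℂ} {τ : Matrix J J ℂ} (hσ : σ.PosSemidef)
    (hτ : τ.PosSemidef) : Separable (σ ⊗ₖ τ) :=
  ⟨1, fun _ => σ, fun _ => τ, fun _ => hσ, fun _ => hτ, by simp⟩

theorem jw_sep_add {ρ ρ' : Matrix (I × J) (I × J) ℂ} (h : Separable ρ) (h' : Separable ρ') :
    Separable (ρ + ρ') := by
  obtain ⟨n, σ, τ, hσ, hτ, rfl⟩ := h
  obtain ⟨m, σ', τ', hσ', hτ', rfl⟩ := h'
  refine ⟨n + m, Fin.append σ σ', Fin.append τ τ', ?_, ?_, ?_⟩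
  · intro k
    refine Fin.addCases (fun i => ?_) (fun i => ?_) k
    · simpa using hσ i
    · simpa using hσ' i
  · intro k
    refine Fin.addCases (fun i => ?_) (fun i => ?_) k
    · simpa using hτ i
    · simpa using hτ' i
  · simp [Fin.sum_univ_add]

theorem jw_sep_induction {p : Matrix (I × J) (I × J) ℂ → Prop} (h0 : p 0)
    (hadd : ∀ a b, p a → p b → p (a + b))
    (hk : ∀ (σ : Matrix I I ℂ) (τ : Matrix J J ℂ), σ.PosSemidef → τ.PosSemidef → p (σ ⊗ₖ τ))
    {ρ : Matrix (I × J) (I × J) ℂ} (h : Separable ρ) : p ρ := by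
  obtain ⟨n, σ, τ, hσ, hτ, rfl⟩ := h
  exact Finset.sum_induction _ p hadd h0 fun k _ => hk _ _ (hσ k) (hτ k)

theorem jw_sep_psd {ρ : Matrix (I × J) (I × J) ℂ} (h : Separable ρ) : ρ.PosSemidef :=
  jw_sep_induction .zero (fun _ _ ha hb => ha.add hb) (fun _ _ hσ hτ => hσ.kronecker hτ) h

theorem jw_psd_smul {n : Type*} [Fintype n] {A : Matrix n n ℂ} (hA : A.PosSemidef) {c : ℝ}
    (hc : 0 ≤ c) : (c • A).PosSemidef := hA.smul hc

theorem jw_sep_smul {ρ : Matrix (I × J) (I × J) ℂ} (h : Separable ρ) {c : ℝ} (hc : 0 ≤ c) :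
    Separable (c • ρ) := by
  refine jw_sep_induction (p := fun ρ => Separable (c • ρ)) ?_ ?_ ?_ h
  · simpa using jw_sep_zero
  · intro a b ha hb
    rw [smul_add]
    exact jw_sep_add ha hb
  · intro σ τ hσ hτ
    rw [← smul_kronecker]
    exact jw_sep_kron (jw_psd_smul hσ hc) hτ

theorem jw_sep_conj {ρ : Matrix (I × J) (I × J) ℂ} (h : Separable ρ) (P : Matrix I I ℂ)
    (S : Matrix J J ℂ) : Separable ((P ⊗ₖ S) * ρ * (P ⊗ₖ S)ᴴ) := by
  refine jw_sep_induction (p := fun ρ => Separable ((P ⊗ₖ S) * ρ * (P ⊗ₖ S)ᴴ)) ?_ ?_ ?_ h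
  · simpa using jw_sep_zero
  · intro a b ha hb
    rw [Matrix.mul_add, Matrix.add_mul]
    exact jw_sep_add ha hb
  · intro σ τ hσ hτ
    rw [conjTranspose_kronecker, ← mul_kronecker_mul, ← mul_kronecker_mul]
    exact jw_sep_kron (hσ.mul_mul_conjTranspose_same P) (hτ.mul_mul_conjTranspose_same S)

theorem jw_psd_trace_eq {n : Type*} [Fintype n] {A : Matrix n n ℂ} (hA : A.PosSemidef) :
    A.trace = ((A.trace.re : ℝ) : ℂ) := by
  have := (Complex.le_def.mp hA.trace_nonneg).2
  apply Complex.ext <;> simp_all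

theorem jw_psd_trace_re {n : Type*} [Fintype n] {A : Matrix n n ℂ} (hA : A.PosSemidef) :
    0 ≤ A.trace.re := (Complex.le_def.mp hA.trace_nonneg).1

theorem jw_psd_eq_zero {n : Type*} [Fintype n] {A : Matrix n n ℂ} (hA : A.PosSemidef)
    (h : A.trace.re = 0) : A = 0 := by
  rw [← hA.trace_eq_zero_iff, jw_psd_trace_eq hA, h]; simp

/-- normalisation of a positive semidefinite matrix -/
theorem jw_psd_normalize {n : Type*} [Fintype n] {A : Matrix n n ℂ} (hA : A.PosSemidef)
    (h0 : A ≠ 0) : ∃ c : ℝ, 0 < c ∧ ∃ A' : Matrix n n ℂ,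
      (A'.PosSemidef ∧ A'.trace = 1) ∧ A = c • A' := by
  have hpos : 0 < A.trace.re :=
    lt_of_le_of_ne (jw_psd_trace_re hA) fun h => h0 (jw_psd_eq_zero hA h.symm)
  refine ⟨A.trace.re, hpos, (A.trace.re)⁻¹ • A,
    ⟨jw_psd_smul hA (inv_nonneg.mpr hpos.le), ?_⟩, ?_⟩
  · rw [Matrix.trace_smul, jw_psd_trace_eq hA]
    have : ((A.trace.re : ℝ) : ℂ) ≠ 0 := by exact_mod_cast hpos.ne'
    simp [this]
  · rw [smul_smul, mul_inv_cancel₀ hpos.ne', one_smul]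

theorem jw_sep_isClosed : IsClosed {ρ : Matrix (I × J) (I × J) ℂ | Separable ρ} := by
  classical
  set T : Set (Matrix (I × J) (I × J) ℂ) := (fun p : Matrix I I ℂ × Matrix J J ℂ => p.1 ⊗ₖ p.2) ''
    ({A | A.PosSemidef ∧ A.trace = 1} ×ˢ {A | A.PosSemidef ∧ A.trace = 1}) with hT
  have hTc : IsCompact T := by
    refine (jw_isCompact_states.prod jw_isCompact_states).image ?_
    refine continuous_matrix fun i j => ?_
    change Continuous fun p : Matrix I I ℂ × Matrix J J ℂ => p.1 i.1 j.1 * p.2 i.2 j.2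
    fun_prop
  set K := convexHull ℝ T with hK
  have hKc : IsCompact K := jw_isCompact_convexHull hTc
  have hconv : Convex ℝ {ρ : Matrix (I × J) (I × J) ℂ | Separable ρ ∧ ρ.trace = 1} := by
    intro x hx y hy a b ha hb hab
    refine ⟨jw_sep_add (jw_sep_smul hx.1 ha) (jw_sep_smul hy.1 hb), ?_⟩
    rw [Matrix.trace_add, Matrix.trace_smul, Matrix.trace_smul, hx.2, hy.2, ← add_smul, hab,
      one_smul]
  have hKs : K ⊆ {ρ : Matrix (I × J) (I × J) ℂ | Separable ρ ∧ ρ.trace = 1} := by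
    refine convexHull_min ?_ hconv
    rintro _ ⟨⟨σ, τ⟩, ⟨⟨hσ, hσ1⟩, hτ, hτ1⟩, rfl⟩
    refine ⟨jw_sep_kron hσ hτ, ?_⟩
    simp only [trace_kronecker]
    simp only at hσ1 hτ1
    rw [hσ1, hτ1, one_mul]
  have hrep : ∀ ρ : Matrix (I × J) (I × J) ℂ, Separable ρ →
      ρ = 0 ∨ ∃ c : ℝ, 0 < c ∧ ∃ k ∈ K, ρ = c • k := by
    intro ρ h
    refine jw_sep_induction (p := fun ρ => ρ = 0 ∨ ∃ c : ℝ, 0 < c ∧ ∃ k ∈ K, ρ = c • k) ?_ ?_ ?_ h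
    · exact Or.inl rfl
    · rintro a b (rfl | ⟨c, hc, k, hk, rfl⟩) hb
      · simpa using hb
      rcases hb with (rfl | ⟨c', hc', k', hk', rfl⟩)
      · exact Or.inr ⟨c, hc, k, hk, by simp⟩
      · refine Or.inr ⟨c + c', by positivity, (c / (c + c')) • k + (c' / (c + c')) • k',
          convex_convexHull ℝ T hk hk' (by positivity) (by positivity) (by field_simp), ?_⟩
        rw [smul_add, smul_smul, smul_smul, mul_div_cancel₀ _ (by positivity),
          mul_div_cancel₀ _ (by positivity)]
    · intro σ τ hσ hτ
      by_cases h1 : σ = 0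
      · left; simp [h1]
      by_cases h2 : τ = 0
      · left; simp [h2]
      obtain ⟨c, hc, σ', hσ', rfl⟩ := jw_psd_normalize hσ h1
      obtain ⟨d, hd, τ', hτ', rfl⟩ := jw_psd_normalize hτ h2
      refine Or.inr ⟨c * d, by positivity, σ' ⊗ₖ τ', subset_convexHull ℝ T ⟨(σ', τ'), ⟨hσ', hτ'⟩, rfl⟩, ?_⟩
      rw [smul_kronecker, kronecker_smul, smul_smul]
  have hset : {ρ : Matrix (I × J) (I × J) ℂ | Separable ρ} = {0} ∪
      Prod.snd '' ({p : Matrix (I × J) (I × J) ℂ × Matrix (I × J) (I × J) ℂ |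
        p.1 ∈ K ∧ 0 ≤ p.2.trace.re ∧ p.2 = p.2.trace.re • p.1}) := by
    ext ρ
    constructor
    · intro h
      rcases hrep ρ h with (rfl | ⟨c, hc, k, hk, rfl⟩)
      · left; rfl
      · right
        have : (c • k).trace.re = c := by
          rw [Matrix.trace_smul, (hKs hk).2]; simp
        refine ⟨(k, c • k), ⟨hk, ?_, ?_⟩, rfl⟩
        · simp only [this]; exact hc.le
        · simp only [this]
    · rintro (rfl | ⟨⟨k, ρ'⟩, ⟨hk, h0, h1⟩, rfl⟩)
      · exact jw_sep_zero
      · simp only at h0 h1 hk ⊢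
        change Separable ρ'
        rw [h1]
        exact jw_sep_smul (hKs hk).1 h0
  rw [hset]
  refine isClosed_singleton.union ?_
  have hcl : IsClosed ({p : Matrix (I × J) (I × J) ℂ × Matrix (I × J) (I × J) ℂ |
        p.1 ∈ K ∧ 0 ≤ p.2.trace.re ∧ p.2 = p.2.trace.re • p.1}) := by
    have hre : Continuous fun p : Matrix (I × J) (I × J) ℂ × Matrix (I × J) (I × J) ℂ =>
        p.2.trace.re := Complex.continuous_re.comp (by fun_prop)
    refine IsClosed.inter (hKc.isClosed.preimage continuous_fst) (IsClosed.inter ?_ ?_)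
    · exact isClosed_le continuous_const hre
    · exact isClosed_eq continuous_snd (hre.smul continuous_fst)
  haveI : CompactSpace K := isCompact_iff_compactSpace.1 hKc
  have hcl2 := hcl.preimage (f := fun p : K × Matrix (I × J) (I × J) ℂ => (p.1.1, p.2))
    (by fun_prop)
  have := isClosedMap_snd_of_compactSpace _ hcl2
  convert this using 1
  ext ρ
  constructor
  · rintro ⟨⟨k, ρ'⟩, hk, rfl⟩
    exact ⟨(⟨k, hk.1⟩, ρ'), hk, rfl⟩
  · rintro ⟨⟨k, ρ'⟩, hk, rfl⟩
    exact ⟨(k.1, ρ'), hk, rfl⟩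

theorem jw_coupling {α : Matrix I I ℂ} {β : Matrix J J ℂ} (hα : α.PosSemidef)
    (hβ : β.PosSemidef) (h : α.trace = β.trace) :
    ∃ κ : Matrix (I × J) (I × J) ℂ, Separable κ ∧ trB κ = α ∧ trA κ = β := by
  by_cases h0 : α.trace = 0
  · rw [hα.trace_eq_zero_iff] at h0
    subst h0
    rw [Matrix.trace_zero, eq_comm, hβ.trace_eq_zero_iff] at h
    subst h
    refine ⟨0, jw_sep_zero, ?_, ?_⟩
    · ext; simp [trB]
    · ext; simp [trA]
  · refine ⟨(α.trace.re)⁻¹ • (α ⊗ₖ β), jw_sep_smul (jw_sep_kron hα hβ)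
      (inv_nonneg.mpr (jw_psd_trace_re hα)), ?_, ?_⟩
    · have hb : β.trace = ((α.trace.re : ℝ) : ℂ) := by rw [← h]; exact jw_psd_trace_eq hα
      have h1 : ((α.trace.re : ℝ) : ℂ) ≠ 0 := by rwa [← jw_psd_trace_eq hα]
      ext i i'
      simp only [trB, Matrix.of_apply, Matrix.smul_apply, kronecker_apply, ← Finset.smul_sum,
        ← Finset.mul_sum]
      change _ • (α i i' * β.trace) = _
      rw [hb, Complex.real_smul]
      push_cast
      field_simp
    · have hb := jw_psd_trace_eq hα
      have h1 : ((α.trace.re : ℝ) : ℂ) ≠ 0 := by rwa [← jw_psd_trace_eq hα]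
      ext i i'
      simp only [trA, Matrix.of_apply, Matrix.smul_apply, kronecker_apply, ← Finset.smul_sum,
        ← Finset.sum_mul]
      change _ • (α.trace * β i i') = _
      rw [Complex.real_smul]
      nth_rw 2 [hb]
      push_cast
      field_simp

theorem jw_trB_kron (σ : Matrix I I ℂ) (τ : Matrix J J ℂ) : trB (σ ⊗ₖ τ) = τ.trace • σ := by
  ext i i'
  simp [trB, Matrix.trace, ← Finset.mul_sum, mul_comm]

theorem jw_trA_kron (σ : Matrix I I ℂ) (τ : Matrix J J ℂ) : trA (σ ⊗ₖ τ) = σ.trace • τ := by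
  ext i i'
  simp [trA, Matrix.trace, ← Finset.sum_mul]

theorem jw_trB_add (a b : Matrix (I × J) (I × J) ℂ) : trB (a + b) = trB a + trB b := by
  ext i i'
  simp [trB, Finset.sum_add_distrib]

theorem jw_trA_add (a b : Matrix (I × J) (I × J) ℂ) : trA (a + b) = trA a + trA b := by
  ext i i'
  simp [trA, Finset.sum_add_distrib]

theorem jw_trB_zero : trB (0 : Matrix (I × J) (I × J) ℂ) = 0 := by
  ext i i'
  simp [trB]

theorem jw_trA_zero : trA (0 : Matrix (I × J) (I × J) ℂ) = 0 := by
  ext i i'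
  simp [trA]

theorem jw_trB_cont : Continuous (trB : Matrix (I × J) (I × J) ℂ → _) := by
  refine continuous_matrix fun i j => ?_
  simp only [trB, Matrix.of_apply]
  fun_prop

theorem jw_trA_cont : Continuous (trA : Matrix (I × J) (I × J) ℂ → _) := by
  refine continuous_matrix fun i j => ?_
  simp only [trA, Matrix.of_apply]
  fun_prop

theorem jw_trace_trB (ρ : Matrix (I × J) (I × J) ℂ) : (trB ρ).trace = ρ.trace := by
  simp [trB, Matrix.trace, Fintype.sum_prod_type]

theorem jw_trace_trA (ρ : Matrix (I × J) (I × J) ℂ) : (trA ρ).trace = ρ.trace := by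
  simp only [trA, Matrix.trace, Fintype.sum_prod_type, Matrix.diag_apply, Matrix.of_apply]
  exact Finset.sum_comm

theorem jw_trB_psd {ρ : Matrix (I × J) (I × J) ℂ} (h : Separable ρ) : (trB ρ).PosSemidef := by
  refine jw_sep_induction (p := fun ρ => (trB ρ).PosSemidef) ?_ ?_ ?_ h
  · rw [jw_trB_zero]; exact .zero
  · intro a b ha hb
    rw [jw_trB_add]; exact ha.add hb
  · intro σ τ hσ hτ
    rw [jw_trB_kron]; exact hσ.smul hτ.trace_nonneg

theorem jw_trA_psd {ρ : Matrix (I × J) (I × J) ℂ} (h : Separable ρ) : (trA ρ).PosSemidef := by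
  refine jw_sep_induction (p := fun ρ => (trA ρ).PosSemidef) ?_ ?_ ?_ h
  · rw [jw_trA_zero]; exact .zero
  · intro a b ha hb
    rw [jw_trA_add]; exact ha.add hb
  · intro σ τ hσ hτ
    rw [jw_trA_kron]; exact hτ.smul hσ.trace_nonneg

theorem jw_trace_meas {n : Type*} [Fintype n] [DecidableEq n] {S T : Matrix n n ℂ}
    (h : Sᴴ * S + Tᴴ * T = 1) (τ : Matrix n n ℂ) :
    (S * τ * Sᴴ).trace + (T * τ * Tᴴ).trace = τ.trace := by
  rw [Matrix.trace_mul_comm, Matrix.trace_mul_comm (T * τ), ← Matrix.mul_assoc, ← Matrix.mul_assoc,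
    ← Matrix.trace_add, ← Matrix.add_mul, h, Matrix.one_mul]

theorem jw_trB_meas [DecidableEq J] {S T : Matrix J J ℂ} (hST : Sᴴ * S + Tᴴ * T = 1)
    (P : Matrix I I ℂ) {ρ : Matrix (I × J) (I × J) ℂ} (h : Separable ρ) :
    P * trB ρ * Pᴴ = trB ((P ⊗ₖ S) * ρ * (P ⊗ₖ S)ᴴ) + trB ((P ⊗ₖ T) * ρ * (P ⊗ₖ T)ᴴ) := by
  refine jw_sep_induction (p := fun ρ => P * trB ρ * Pᴴ =
    trB ((P ⊗ₖ S) * ρ * (P ⊗ₖ S)ᴴ) + trB ((P ⊗ₖ T) * ρ * (P ⊗ₖ T)ᴴ)) ?_ ?_ ?_ h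
  · simp [jw_trB_zero]
  · intro a b ha hb
    simp only [jw_trB_add, Matrix.mul_add, Matrix.add_mul, ha, hb]
    abel
  · intro σ τ _ _
    simp only [conjTranspose_kronecker, ← mul_kronecker_mul, jw_trB_kron]
    rw [← add_smul, jw_trace_meas hST, Matrix.mul_smul, Matrix.smul_mul]

theorem jw_trA_meas [DecidableEq I] {P Q : Matrix I I ℂ} (hPQ : Pᴴ * P + Qᴴ * Q = 1)
    (S : Matrix J J ℂ) {ρ : Matrix (I × J) (I × J) ℂ} (h : Separable ρ) :
    S * trA ρ * Sᴴ = trA ((P ⊗ₖ S) * ρ * (P ⊗ₖ S)ᴴ) + trA ((Q ⊗ₖ S) * ρ * (Q ⊗ₖ S)ᴴ) := by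
  refine jw_sep_induction (p := fun ρ => S * trA ρ * Sᴴ =
    trA ((P ⊗ₖ S) * ρ * (P ⊗ₖ S)ᴴ) + trA ((Q ⊗ₖ S) * ρ * (Q ⊗ₖ S)ᴴ)) ?_ ?_ ?_ h
  · simp [jw_trA_zero]
  · intro a b ha hb
    simp only [jw_trA_add, Matrix.mul_add, Matrix.add_mul, ha, hb]
    abel
  · intro σ τ _ _
    simp only [conjTranspose_kronecker, ← mul_kronecker_mul, jw_trA_kron]
    rw [← add_smul, jw_trace_meas hPQ, Matrix.mul_smul, Matrix.smul_mul]


theorem jw_psd_hasSum {n : Type*} [Fintype n] {f : ℕ → Matrix n n ℂ} {s : Matrix n n ℂ}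
    (h : HasSum f s) (hf : ∀ k, (f k).PosSemidef) : s.PosSemidef := by
  refine jw_isClosed_psd.mem_of_tendsto h.tendsto_sum_nat (Filter.Eventually.of_forall fun N => ?_)
  exact Matrix.posSemidef_sum _ fun k _ => hf k

/-- The behaviour of one marginal along the loop. -/
theorem jw_side [DecidableEq I] {P Q : Matrix I I ℂ} (hPQ : Pᴴ * P + Qᴴ * Q = 1)
    (E : Matrix I I ℂ →ₗ[ℂ] Matrix I I ℂ)
    (hEpos : ∀ ρ : Matrix I I ℂ, ρ.PosSemidef → (E ρ).PosSemidef)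
    (hEtr : ∀ ρ : Matrix I I ℂ, Matrix.trace (E ρ) = Matrix.trace ρ)
    (a tt e g g' : ℕ → Matrix I I ℂ)
    (ha : ∀ n, (a n).PosSemidef) (he : ∀ n, (e n).PosSemidef) (hg : ∀ n, (g n).PosSemidef)
    (hg' : ∀ n, (g' n).PosSemidef)
    (h1 : ∀ n, P * a n * Pᴴ = tt n + e n) (h2 : ∀ n, Q * a n * Qᴴ = g n + g' n)
    (h3 : ∀ n, a (n + 1) = E (tt n))
    (hs : Summable (fun n : ℕ => Q * ((⇑E ∘ fun ρ => P * ρ * Pᴴ)^[n] (a 0)) * Qᴴ))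
    (ht : Matrix.trace (∑' n : ℕ, Q * ((⇑E ∘ fun ρ => P * ρ * Pᴴ)^[n] (a 0)) * Qᴴ)
      = Matrix.trace (a 0)) :
    Filter.Tendsto (fun n => (a n).trace.re) Filter.atTop (nhds 0) ∧
    Summable (fun n => (g n).trace.re) ∧
    ∀ γ, HasSum g γ →
      ((∑' n : ℕ, Q * ((⇑E ∘ fun ρ => P * ρ * Pᴴ)^[n] (a 0)) * Qᴴ) - γ).PosSemidef := by
  set G : ℕ → Matrix I I ℂ := fun n => (⇑E ∘ fun ρ => P * ρ * Pᴴ)^[n] (a 0) with hG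
  have hG0 : G 0 = a 0 := rfl
  have hGs : ∀ n, G (n + 1) = E (P * G n * Pᴴ) := by
    intro n
    simp only [hG, Function.iterate_succ_apply', Function.comp_apply]
  have hD : ∀ n, (G n - a n).PosSemidef := by
    intro n
    induction n with
    | zero => rw [hG0, sub_self]; exact .zero
    | succ n ih =>
      have : G (n + 1) - a (n + 1) = E (P * (G n - a n) * Pᴴ + e n) := by
        rw [hGs, h3, ← map_sub]
        congr 1
        rw [Matrix.mul_sub, Matrix.sub_mul, h1]
        abel
      rw [this]
      exact hEpos _ ((ih.mul_mul_conjTranspose_same P).add (he n))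
  have hf : ∀ n, (Q * G n * Qᴴ - g n).PosSemidef := by
    intro n
    have : Q * G n * Qᴴ - g n = Q * (G n - a n) * Qᴴ + g' n := by
      rw [Matrix.mul_sub, Matrix.sub_mul, h2]
      abel
    rw [this]
    exact ((hD n).mul_mul_conjTranspose_same Q).add (hg' n)
  have htrs : HasSum (fun n => (Q * G n * Qᴴ).trace) (a 0).trace := by
    rw [← ht]
    exact hs.hasSum.map (Matrix.traceAddMonoidHom I ℂ) (by
      change Continuous fun A : Matrix I I ℂ => A.trace
      fun_prop)
  have htel : ∀ N, ∑ n ∈ Finset.range N, (Q * G n * Qᴴ).trace = (a 0).trace - (G N).trace := by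
    intro N
    induction N with
    | zero => simp [hG0]
    | succ N ih =>
      rw [Finset.sum_range_succ, ih, hGs, hEtr, ← jw_trace_meas hPQ (G N)]
      ring
  have hG0' : Filter.Tendsto (fun n => (G n).trace) Filter.atTop (nhds 0) := by
    have := htrs.tendsto_sum_nat
    simp only [htel] at this
    have := this.const_sub (a 0).trace
    simpa using this
  have hG0'' : Filter.Tendsto (fun n => (G n).trace.re) Filter.atTop (nhds 0) := by
    have := (Complex.continuous_re.tendsto _).comp hG0'
    simpa [Function.comp_def] using this
  refine ⟨?_, ?_, ?_⟩
  · refine squeeze_zero (fun n => jw_psd_trace_re (ha n)) (fun n => ?_) hG0''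
    have := jw_psd_trace_re (hD n)
    rw [Matrix.trace_sub, Complex.sub_re] at this
    linarith
  · refine Summable.of_nonneg_of_le (fun n => jw_psd_trace_re (hg n)) (fun n => ?_)
      (Complex.hasSum_re htrs).summable
    have := jw_psd_trace_re (hf n)
    rw [Matrix.trace_sub, Complex.sub_re] at this
    linarith
  · intro γ hγ
    exact jw_psd_hasSum (hs.hasSum.sub hγ) hf

theorem jw_main [DecidableEq I] [DecidableEq J] {P Q : Matrix I I ℂ}
    (hPQ : Pᴴ * P + Qᴴ * Q = 1) {S T : Matrix J J ℂ} (hST : Sᴴ * S + Tᴴ * T = 1)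
    (E : Matrix I I ℂ →ₗ[ℂ] Matrix I I ℂ) (F : Matrix J J ℂ →ₗ[ℂ] Matrix J J ℂ)
    (hEpos : ∀ ρ : Matrix I I ℂ, ρ.PosSemidef → (E ρ).PosSemidef)
    (hEtr : ∀ ρ : Matrix I I ℂ, Matrix.trace (E ρ) = Matrix.trace ρ)
    (hFpos : ∀ ρ : Matrix J J ℂ, ρ.PosSemidef → (F ρ).PosSemidef)
    (hFtr : ∀ ρ : Matrix J J ℂ, Matrix.trace (F ρ) = Matrix.trace ρ)
    (hterm1 : ∀ ρ : Matrix I I ℂ, ρ.PosSemidef →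
      Summable (fun n : ℕ => Q * ((⇑E ∘ fun ρ => P * ρ * Pᴴ)^[n] ρ) * Qᴴ) ∧
      Matrix.trace (∑' n : ℕ, Q * ((⇑E ∘ fun ρ => P * ρ * Pᴴ)^[n] ρ) * Qᴴ) = Matrix.trace ρ)
    (hterm2 : ∀ ρ : Matrix J J ℂ, ρ.PosSemidef →
      Summable (fun n : ℕ => T * ((⇑F ∘ fun ρ => S * ρ * Sᴴ)^[n] ρ) * Tᴴ) ∧
      Matrix.trace (∑' n : ℕ, T * ((⇑F ∘ fun ρ => S * ρ * Sᴴ)^[n] ρ) * Tᴴ) = Matrix.trace ρ)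
    (A B C : Matrix (I × J) (I × J) ℂ) (hB : B.PosSemidef)
    (hC : C = (P ⊗ₖ S)ᴴ * A * (P ⊗ₖ S) + (Q ⊗ₖ T)ᴴ * B * (Q ⊗ₖ T))
    (h : qRHL A E F C) :
    qRHL C (fun ρ => ∑' n : ℕ, Q * ((⇑E ∘ fun ρ => P * ρ * Pᴴ)^[n] ρ) * Qᴴ)
      (fun ρ => ∑' n : ℕ, T * ((⇑F ∘ fun ρ => S * ρ * Sᴴ)^[n] ρ) * Tᴴ) B := by
  intro ρ _ hρ
  have hstep : ∀ ρ : {ρ : Matrix (I × J) (I × J) ℂ // Separable ρ},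
      ∃ ρ' : {ρ : Matrix (I × J) (I × J) ℂ // Separable ρ},
      trB ρ'.1 = E (trB ((P ⊗ₖ S) * ρ.1 * (P ⊗ₖ S)ᴴ)) ∧
      trA ρ'.1 = F (trA ((P ⊗ₖ S) * ρ.1 * (P ⊗ₖ S)ᴴ)) ∧
      (Matrix.trace (A * ((P ⊗ₖ S) * ρ.1 * (P ⊗ₖ S)ᴴ))).re ≤ (Matrix.trace (C * ρ'.1)).re := by
    rintro ⟨ρ, hρ⟩
    have hs := jw_sep_conj hρ P S
    obtain ⟨ρ', -, h1, h2, h3, h4⟩ := h _ (jw_sep_psd hs) hs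
    exact ⟨⟨ρ', h1⟩, h2, h3, h4⟩
  choose step hstepB hstepA hstepC using hstep
  set r : ℕ → {ρ : Matrix (I × J) (I × J) ℂ // Separable ρ} := fun n => step^[n] ⟨ρ, hρ⟩ with hr
  have hr0 : (r 0).1 = ρ := rfl
  have hrs : ∀ n, r (n + 1) = step (r n) := fun n => Function.iterate_succ_apply' _ _ _
  set ff : ℕ → Matrix (I × J) (I × J) ℂ := fun n => (Q ⊗ₖ T) * (r n).1 * (Q ⊗ₖ T)ᴴ with hff
  have hffs : ∀ n, Separable (ff n) := fun n => jw_sep_conj (r n).2 Q T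
  have hPQ' : Qᴴ * Q + Pᴴ * P = 1 := by rw [add_comm]; exact hPQ
  have hST' : Tᴴ * T + Sᴴ * S = 1 := by rw [add_comm]; exact hST
  obtain ⟨hs1, ht1⟩ := hterm1 _ (jw_trB_psd hρ)
  obtain ⟨hs2, ht2⟩ := hterm2 _ (jw_trA_psd hρ)
  obtain ⟨hlim, hsum, hres1⟩ := jw_side hPQ E hEpos hEtr
    (fun n => trB (r n).1) (fun n => trB ((P ⊗ₖ S) * (r n).1 * (P ⊗ₖ S)ᴴ))
    (fun n => trB ((P ⊗ₖ T) * (r n).1 * (P ⊗ₖ T)ᴴ)) (fun n => trB (ff n))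
    (fun n => trB ((Q ⊗ₖ S) * (r n).1 * (Q ⊗ₖ S)ᴴ))
    (fun n => jw_trB_psd (r n).2) (fun n => jw_trB_psd (jw_sep_conj (r n).2 _ _))
    (fun n => jw_trB_psd (hffs n)) (fun n => jw_trB_psd (jw_sep_conj (r n).2 _ _))
    (fun n => jw_trB_meas hST P (r n).2) (fun n => jw_trB_meas hST' Q (r n).2)
    (fun n => by simp only [hrs, hstepB]) hs1 ht1
  obtain ⟨-, -, hres2⟩ := jw_side hST F hFpos hFtr
    (fun n => trA (r n).1) (fun n => trA ((P ⊗ₖ S) * (r n).1 * (P ⊗ₖ S)ᴴ))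
    (fun n => trA ((Q ⊗ₖ S) * (r n).1 * (Q ⊗ₖ S)ᴴ)) (fun n => trA (ff n))
    (fun n => trA ((P ⊗ₖ T) * (r n).1 * (P ⊗ₖ T)ᴴ))
    (fun n => jw_trA_psd (r n).2) (fun n => jw_trA_psd (jw_sep_conj (r n).2 _ _))
    (fun n => jw_trA_psd (hffs n)) (fun n => jw_trA_psd (jw_sep_conj (r n).2 _ _))
    (fun n => jw_trA_meas hPQ S (r n).2) (fun n => jw_trA_meas hPQ' T (r n).2)
    (fun n => by simp only [hrs, hstepA]) hs2 ht2
  simp only [jw_trace_trB] at hlim hsum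
  have hffsum : Summable ff := by
    refine Pi.summable.mpr fun i => Pi.summable.mpr fun j => ?_
    exact Summable.of_norm_bounded hsum fun n => jw_psd_entry (jw_sep_psd (hffs n)) i j
  obtain ⟨ω, hω⟩ := hffsum
  have hωsep : Separable ω := by
    refine jw_sep_isClosed.mem_of_tendsto hω.tendsto_sum_nat
      (Filter.Eventually.of_forall fun N => ?_)
    exact Finset.sum_induction _ Separable (fun _ _ => jw_sep_add) jw_sep_zero fun k _ => hffs k
  have hωB : HasSum (fun n => trB (ff n)) (trB ω) :=
    hω.map (AddMonoidHom.mk' trB jw_trB_add) jw_trB_cont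
  have hωA : HasSum (fun n => trA (ff n)) (trA ω) :=
    hω.map (AddMonoidHom.mk' trA jw_trA_add) jw_trA_cont
  obtain ⟨κ, hκ, hκB, hκA⟩ := jw_coupling (hres1 _ hωB) (hres2 _ hωA) (by
    simp only [hr0, Matrix.trace_sub]
    rw [ht1, ht2, jw_trace_trA, jw_trace_trA, jw_trace_trB, jw_trace_trB])
  simp only [hr0] at hκB hκA
  refine ⟨ω + κ, jw_sep_psd (jw_sep_add hωsep hκ), jw_sep_add hωsep hκ, ?_, ?_, ?_⟩
  · rw [jw_trB_add, hκB]; abel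
  · rw [jw_trA_add, hκA]; abel
  have hsplit : ∀ n, (C * (r n).1).trace.re =
      (A * ((P ⊗ₖ S) * (r n).1 * (P ⊗ₖ S)ᴴ)).trace.re + (B * ff n).trace.re := by
    intro n
    rw [hC, Matrix.add_mul, Matrix.trace_add, Complex.add_re]
    have key : ∀ D V W : Matrix (I × J) (I × J) ℂ,
        (Vᴴ * D * V * W).trace = (D * (V * W * Vᴴ)).trace := by
      intro D V W
      rw [Matrix.mul_assoc, Matrix.mul_assoc, Matrix.trace_mul_comm, Matrix.mul_assoc]
    rw [key, key]
  have hle : ∀ N, (C * ρ).trace.re ≤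
      (B * ∑ n ∈ Finset.range N, ff n).trace.re + (C * (r N).1).trace.re := by
    intro N
    induction N with
    | zero => simp [hr0]
    | succ N ih =>
      have h1 := hstepC (r N)
      rw [← hrs] at h1
      rw [Finset.sum_range_succ, Matrix.mul_add, Matrix.trace_add, Complex.add_re]
      rw [hsplit] at ih
      linarith
  have hr_lim : Filter.Tendsto (fun n => (r n).1) Filter.atTop (nhds 0) := by
    refine tendsto_pi_nhds.mpr fun i => tendsto_pi_nhds.mpr fun j => ?_
    exact squeeze_zero_norm (fun n => jw_psd_entry (jw_sep_psd (r n).2) i j) hlim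
  have hcont : ∀ D : Matrix (I × J) (I × J) ℂ,
      Continuous fun W : Matrix (I × J) (I × J) ℂ => (D * W).trace.re :=
    fun D => Complex.continuous_re.comp (by fun_prop)
  have hfin := (((hcont B).tendsto _).comp hω.tendsto_sum_nat).add
    (((hcont C).tendsto _).comp hr_lim)
  have hle' := ge_of_tendsto' hfin hle
  have hκ0 := jw_trace_mul_nonneg hB (jw_sep_psd hκ)
  rw [Matrix.mul_add, Matrix.trace_add, Complex.add_re]
  simp only [Matrix.mul_zero, Matrix.trace_zero, Complex.zero_re] at hle'
  linarith

end JW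

/-- Rule JointWhile: simultaneous while loops on both sides. -/
theorem qRHL_jointWhile {X X' Y Y' : Type*}
    [Fintype X] [Fintype X'] [Fintype Y] [Fintype Y']
    [DecidableEq X] [DecidableEq X'] [DecidableEq Y] [DecidableEq Y']
    (Mt Mf : Matrix X X ℂ) (hM : Mtᴴ * Mt + Mfᴴ * Mf = 1)
    (Nt Nf : Matrix Y Y ℂ) (hN : Ntᴴ * Nt + Nfᴴ * Nf = 1)
    (E : Matrix (X × X') (X × X') ℂ →ₗ[ℂ] Matrix (X × X') (X × X') ℂ)
    (F : Matrix (Y × Y') (Y × Y') ℂ →ₗ[ℂ] Matrix (Y × Y') (Y × Y') ℂ)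
    (hEpos : ∀ ρ : Matrix (X × X') (X × X') ℂ, ρ.PosSemidef → (E ρ).PosSemidef)
    (hEtr : ∀ ρ : Matrix (X × X') (X × X') ℂ, Matrix.trace (E ρ) = Matrix.trace ρ)
    (hFpos : ∀ σ : Matrix (Y × Y') (Y × Y') ℂ, σ.PosSemidef → (F σ).PosSemidef)
    (hFtr : ∀ σ : Matrix (Y × Y') (Y × Y') ℂ, Matrix.trace (F σ) = Matrix.trace σ)
    -- one-step operations of the two loops
    (R1t R1f : Matrix (X × X') (X × X') ℂ → Matrix (X × X') (X × X') ℂ)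
    (hR1t : R1t = fun ρ => (Mt ⊗ₖ (1 : Matrix X' X' ℂ)) * ρ * (Mt ⊗ₖ (1 : Matrix X' X' ℂ))ᴴ)
    (hR1f : R1f = fun ρ => (Mf ⊗ₖ (1 : Matrix X' X' ℂ)) * ρ * (Mf ⊗ₖ (1 : Matrix X' X' ℂ))ᴴ)
    (R2t R2f : Matrix (Y × Y') (Y × Y') ℂ → Matrix (Y × Y') (Y × Y') ℂ)
    (hR2t : R2t = fun σ => (Nt ⊗ₖ (1 : Matrix Y' Y' ℂ)) * σ * (Nt ⊗ₖ (1 : Matrix Y' Y' ℂ))ᴴ)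
    (hR2f : R2f = fun σ => (Nf ⊗ₖ (1 : Matrix Y' Y' ℂ)) * σ * (Nf ⊗ₖ (1 : Matrix Y' Y' ℂ))ᴴ)
    -- termination of the two while loops
    (hterm1 : ∀ ρ : Matrix (X × X') (X × X') ℂ, ρ.PosSemidef →
      Summable (fun n : ℕ => R1f ((⇑E ∘ R1t)^[n] ρ)) ∧
      Matrix.trace (∑' n : ℕ, R1f ((⇑E ∘ R1t)^[n] ρ)) = Matrix.trace ρ)
    (hterm2 : ∀ σ : Matrix (Y × Y') (Y × Y') ℂ, σ.PosSemidef →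
      Summable (fun n : ℕ => R2f ((⇑F ∘ R2t)^[n] σ)) ∧
      Matrix.trace (∑' n : ℕ, R2f ((⇑F ∘ R2t)^[n] σ)) = Matrix.trace σ)
    (A B : Matrix ((X × X') × (Y × Y')) ((X × X') × (Y × Y')) ℂ)
    (hA : A.PosSemidef) (hB : B.PosSemidef)
    (C : Matrix ((X × X') × (Y × Y')) ((X × X') × (Y × Y')) ℂ)
    (hC : C =
      ((Mt ⊗ₖ (1 : Matrix X' X' ℂ)) ⊗ₖ (1 : Matrix (Y × Y') (Y × Y') ℂ))ᴴ *
        ((1 : Matrix (X × X') (X × X') ℂ) ⊗ₖ (Nt ⊗ₖ (1 : Matrix Y' Y' ℂ)))ᴴ *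
        A *
        ((1 : Matrix (X × X') (X × X') ℂ) ⊗ₖ (Nt ⊗ₖ (1 : Matrix Y' Y' ℂ))) *
        ((Mt ⊗ₖ (1 : Matrix X' X' ℂ)) ⊗ₖ (1 : Matrix (Y × Y') (Y × Y') ℂ)) +
      ((Mf ⊗ₖ (1 : Matrix X' X' ℂ)) ⊗ₖ (1 : Matrix (Y × Y') (Y × Y') ℂ))ᴴ *
        ((1 : Matrix (X × X') (X × X') ℂ) ⊗ₖ (Nf ⊗ₖ (1 : Matrix Y' Y' ℂ)))ᴴ *
        B *
        ((1 : Matrix (X × X') (X × X') ℂ) ⊗ₖ (Nf ⊗ₖ (1 : Matrix Y' Y' ℂ))) *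
        ((Mf ⊗ₖ (1 : Matrix X' X' ℂ)) ⊗ₖ (1 : Matrix (Y × Y') (Y × Y') ℂ)))
    (h : qRHL A E F C) :
    qRHL C
      (fun ρ => ∑' n : ℕ, R1f ((⇑E ∘ R1t)^[n] ρ))
      (fun σ => ∑' n : ℕ, R2f ((⇑F ∘ R2t)^[n] σ))
      B := by
  subst hR1t hR1f hR2t hR2f
  have hPQ : (Mt ⊗ₖ (1 : Matrix X' X' ℂ))ᴴ * (Mt ⊗ₖ (1 : Matrix X' X' ℂ)) +
      (Mf ⊗ₖ (1 : Matrix X' X' ℂ))ᴴ * (Mf ⊗ₖ (1 : Matrix X' X' ℂ)) = 1 := by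
    simp only [conjTranspose_kronecker, ← mul_kronecker_mul, conjTranspose_one, Matrix.mul_one]
    rw [← add_kronecker, hM, one_kronecker_one]
  have hST : (Nt ⊗ₖ (1 : Matrix Y' Y' ℂ))ᴴ * (Nt ⊗ₖ (1 : Matrix Y' Y' ℂ)) +
      (Nf ⊗ₖ (1 : Matrix Y' Y' ℂ))ᴴ * (Nf ⊗ₖ (1 : Matrix Y' Y' ℂ)) = 1 := by
    simp only [conjTranspose_kronecker, ← mul_kronecker_mul, conjTranspose_one, Matrix.mul_one]
    rw [← add_kronecker, hN, one_kronecker_one]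
  have key : ∀ (V : Matrix (X × X') (X × X') ℂ) (W : Matrix (Y × Y') (Y × Y') ℂ)
      (D : Matrix ((X × X') × (Y × Y')) ((X × X') × (Y × Y')) ℂ),
      (V ⊗ₖ (1 : Matrix (Y × Y') (Y × Y') ℂ))ᴴ * ((1 : Matrix (X × X') (X × X') ℂ) ⊗ₖ W)ᴴ * D *
        ((1 : Matrix (X × X') (X × X') ℂ) ⊗ₖ W) * (V ⊗ₖ (1 : Matrix (Y × Y') (Y × Y') ℂ)) =
      (V ⊗ₖ W)ᴴ * D * (V ⊗ₖ W) := by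
    intro V W D
    have hVW : ((1 : Matrix (X × X') (X × X') ℂ) ⊗ₖ W) *
        (V ⊗ₖ (1 : Matrix (Y × Y') (Y × Y') ℂ)) = V ⊗ₖ W := by
      rw [← mul_kronecker_mul, Matrix.one_mul, Matrix.mul_one]
    rw [← conjTranspose_mul, Matrix.mul_assoc, hVW]
  rw [key, key] at hC
  exact jw_main hPQ hST E F hEpos hEtr hFpos hFtr hterm1 hterm2 A B C hB hC h
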